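/- arXiv:1705.09195 — 2 statements merged into one kernel-verified Lean document; each statement's English description precedes it below -/
import Mathlib

section
/- Let X ⊆ P² be a k-configuration of type (1,2,…,s) with s ≥ 2, defined using subsets X₁,…,X_s and lines L₁,…,L_s, with X₁ = {P} where P = [1:0:0], and with X₂ = {Q₁,Q₂} where Q₁ = [0:1:0] and Q₂ = [0:0:1]. Assume that no line in P² containing exactly s points of X passes through P, and set Y = X \ {P}. Then for every integer m ≥ s + 1, the graded piece of R/(I_{mY} + I_P^m) in degree m·s − 2 is zero; equivalently, (I_{mY} + I_P^m)_{ms−2} = R_{ms−2}. -/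
/-- The projective plane over a field `K`, as the projectivization of `K³`. -/
abbrev P2 (K : Type) [Field K] := Projectivization K (Fin 3 → K)

/-- A line in `P2 K`: a 2-dimensional linear subspace of `K³`. -/
structure ProjLine (K : Type) [Field K] where
  toSubmodule : Submodule K (Fin 3 → K)
  finrank_eq_two : Module.finrank K toSubmodule = 2

/-- The set of points of `P2 K` lying on a line. -/
def ProjLine.points {K : Type} [Field K] (L : ProjLine K) : Set (P2 K) :=
  {p | p.submodule ≤ L.toSubmodule}

/-- The homogeneous prime ideal of a point of `P2 K`: the ideal generated by
the linear forms vanishing at the point. -/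
noncomputable def pointIdeal {K : Type} [Field K] (p : P2 K) :
    Ideal (MvPolynomial (Fin 3) K) :=
  Ideal.span {f | f.IsHomogeneous 1 ∧ MvPolynomial.eval p.rep f = 0}

/-- The defining ideal `I_{mX} = ⋂_{P ∈ X} I_P^m` of the fat point scheme `mX`. -/
noncomputable def fatIdeal {K : Type} [Field K] (X : Set (P2 K)) (m : ℕ) :
    Ideal (MvPolynomial (Fin 3) K) :=
  ⨅ p ∈ X, (pointIdeal p) ^ m

/-- The Hilbert function of `R/I`: `H(t) = dim_K R_t - dim_K I_t`. -/
noncomputable def hilb {K : Type} [Field K] (I : Ideal (MvPolynomial (Fin 3) K)) (t : ℕ) : ℕ :=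
  Module.finrank K ↥(MvPolynomial.homogeneousSubmodule (Fin 3) K t) -
    Module.finrank K ↥(Submodule.restrictScalars K (I : Submodule (MvPolynomial (Fin 3) K) (MvPolynomial (Fin 3) K)) ⊓ MvPolynomial.homogeneousSubmodule (Fin 3) K t)

/-- The Hilbert function extended to `ℤ`, with `H(t) = 0` for `t < 0`. -/
noncomputable def hilbZ {K : Type} [Field K] (I : Ideal (MvPolynomial (Fin 3) K)) (t : ℤ) : ℤ :=
  if t < 0 then 0 else hilb I t.toNat

/-- The first difference `ΔH(t) = H(t) - H(t-1)` of the Hilbert function. -/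
noncomputable def deltaHilb {K : Type} [Field K] (I : Ideal (MvPolynomial (Fin 3) K)) (t : ℤ) : ℤ :=
  hilbZ I t - hilbZ I (t - 1)

/-- `X` is a k-configuration of type `(d 0, …, d (s-1))` defined using the subsets
`Xs 0, …, Xs (s-1)` and the (distinct) lines `Ls 0, …, Ls (s-1)`. -/
structure IsKConfig {K : Type} [Field K] {s : ℕ} (X : Set (P2 K)) (d : Fin s → ℕ)
    (Xs : Fin s → Set (P2 K)) (Ls : Fin s → ProjLine K) : Prop where
  one_le : ∀ i, 1 ≤ d i
  strictMono : StrictMono d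
  lines_distinct : Function.Injective Ls
  union_eq : X = ⋃ i, Xs i
  card_eq : ∀ i, (Xs i).ncard = d i
  subset_line : ∀ i, Xs i ⊆ (Ls i).points
  not_mem : ∀ i j : Fin s, j < i → ∀ p ∈ Xs j, p ∉ (Ls i).points

open MvPolynomial

theorem kc_mem_points {K : Type} [Field K] (L : ProjLine K) (p : P2 K) :
    p ∈ L.points ↔ p.rep ∈ L.toSubmodule := by
  unfold ProjLine.points
  rw [Set.mem_ofPred_eq, Projectivization.submodule_eq, Submodule.span_singleton_le_iff_mem]

theorem kc_lineForm {K : Type} [Field K] (L : ProjLine K) :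
    ∃ l : MvPolynomial (Fin 3) K, l.IsHomogeneous 1 ∧
      ∀ v, eval v l = 0 ↔ v ∈ L.toSubmodule := by
  have hlt : L.toSubmodule < ⊤ := by
    rw [lt_top_iff_ne_top]
    intro h
    have h2 := L.finrank_eq_two
    rw [h] at h2
    simp at h2
  obtain ⟨f, hf0, hf⟩ := Submodule.exists_le_ker_of_lt_top _ hlt
  have hker : L.toSubmodule = LinearMap.ker f := by
    apply Submodule.eq_of_le_of_finrank_eq hf
    rw [L.finrank_eq_two]
    have h1 := LinearMap.finrank_range_add_finrank_ker f
    have h2 : LinearMap.range f = ⊤ := LinearMap.range_eq_top.2 (LinearMap.surjective hf0)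
    rw [h2] at h1
    simp at h1
    omega
  refine ⟨∑ i, C (f (Pi.single i 1)) * X i, ?_, ?_⟩
  · apply IsHomogeneous.sum
    intro i _
    simpa using (isHomogeneous_C (Fin 3) (f (Pi.single i 1))).mul (isHomogeneous_X K i)
  · intro v
    rw [hker, LinearMap.mem_ker]
    have : eval v (∑ i, C (f (Pi.single i 1)) * X i) = f v := by
      conv_rhs => rw [LinearMap.pi_apply_eq_sum_univ f v]
      rw [map_sum]
      apply Finset.sum_congr rfl
      intro i _
      simp only [map_mul, eval_C, eval_X, smul_eq_mul]
      rw [mul_comm]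
      congr 2
      ext j
      simp [Pi.single_apply, eq_comm]
    rw [this]

theorem kc_mem_pointIdeal {K : Type} [Field K] {p : P2 K} {l : MvPolynomial (Fin 3) K}
    (h1 : l.IsHomogeneous 1) (h2 : eval p.rep l = 0) : l ∈ pointIdeal p :=
  Ideal.subset_span ⟨h1, h2⟩

theorem kc_X_mem {K : Type} [Field K] {p : P2 K} {t : Fin 3} (h : p.rep t = 0) :
    (X t : MvPolynomial (Fin 3) K) ∈ pointIdeal p :=
  kc_mem_pointIdeal (isHomogeneous_X K t) (by simpa using h)

theorem kc_lines_eq {K : Type} [Field K] {L M : ProjLine K} {a b : P2 K} (hab : a ≠ b)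
    (ha : a ∈ L.points) (hb : b ∈ L.points) (ha' : a ∈ M.points) (hb' : b ∈ M.points) :
    L.toSubmodule = M.toSubmodule := by
  rw [kc_mem_points] at *
  have hli := (Projectivization.independent_pair_iff_ne a b).2 hab
  rw [Projectivization.independent_iff] at hli
  have hr := finrank_span_eq_card hli
  have key : ∀ N : ProjLine K, a.rep ∈ N.toSubmodule → b.rep ∈ N.toSubmodule →
      Submodule.span K (Set.range (Projectivization.rep ∘ ![a, b])) = N.toSubmodule := by
    intro N h1 h2
    apply Submodule.eq_of_le_of_finrank_eq
    · rw [Submodule.span_le]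
      rintro _ ⟨i, rfl⟩
      fin_cases i
      · exact h1
      · exact h2
    · rw [hr, N.finrank_eq_two]; simp
  rw [← key L ha hb, ← key M ha' hb']

theorem kc_monomials {K : Type} [Field K] {m D : ℕ} (J : Ideal (MvPolynomial (Fin 3) K))
    (hJ : ∀ a b, m ≤ a + b → (X 1 ^ a * X 2 ^ b : MvPolynomial (Fin 3) K) ∈ J)
    (H : ∀ a b, a + b < m → ∃ U : MvPolynomial (Fin 3) K, U.IsHomogeneous (D - (a + b)) ∧
      eval ![1, 0, 0] U ≠ 0 ∧ X 1 ^ a * X 2 ^ b * U ∈ J) :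
    ∀ n a b c, m ≤ a + b + n → c + (a + b) = D →
      (X 0 ^ c * X 1 ^ a * X 2 ^ b : MvPolynomial (Fin 3) K) ∈ J := by
  intro n
  induction n with
  | zero =>
    intro a b c h _
    rw [mul_assoc]
    exact J.mul_mem_left _ (hJ a b (by omega))
  | succ n ih =>
    intro a b c h hD
    by_cases hab : m ≤ a + b
    · rw [mul_assoc]
      exact J.mul_mem_left _ (hJ a b hab)
    obtain ⟨U, hU, hU0, hUJ⟩ := H a b (by omega)
    have hc : D - (a + b) = c := by omega
    rw [hc] at hU
    have hmon : ∀ (e : Fin 3 →₀ ℕ) (r : K), monomial e r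
        = C r * (X 0 ^ e 0 * X 1 ^ e 1 * X 2 ^ e 2) := by
      intro e r
      rw [monomial_eq, Finsupp.prod_fintype _ _ (by simp), Fin.prod_univ_three]
    have hdeg : ∀ e ∈ U.support, e 0 + e 1 + e 2 = c := by
      intro e he
      have := hU (mem_support_iff.1 he)
      rw [Finsupp.weight_apply, Finsupp.sum_fintype _ _ (by simp), Fin.sum_univ_three] at this
      simpa using this
    have hsum : ∀ e ∈ U.support, X 1 ^ a * X 2 ^ b * monomial e (U.coeff e) -
        C (eval ![1, 0, 0] (monomial e (U.coeff e))) * (X 0 ^ c * X 1 ^ a * X 2 ^ b) ∈ J := by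
      intro e he
      have hd := hdeg e he
      rw [hmon]
      by_cases h12 : e 1 = 0 ∧ e 2 = 0
      · have h0 : e 0 = c := by omega
        rw [h12.1, h12.2, h0]
        simp only [pow_zero, mul_one, map_mul, eval_C, map_pow, eval_X, Matrix.cons_val_zero,
          one_pow]
        convert J.zero_mem using 1
        ring
      · have hz : eval ![1, 0, 0] (C (coeff e U) * (X 0 ^ e 0 * X 1 ^ e 1 * X 2 ^ e 2)) = 0 := by
          simp only [map_mul, eval_C, map_pow, eval_X]
          by_cases h1 : e 1 = 0
          · have h2 : e 2 ≠ 0 := fun h => h12 ⟨h1, h⟩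
            simp [h2]
          · simp [h1]
        rw [hz, C_0, zero_mul, sub_zero]
        have := J.mul_mem_left (C (coeff e U)) (ih (a + e 1) (b + e 2) (e 0) (by omega) (by omega))
        convert this using 1
        ring
    have hs := J.sum_mem hsum
    rw [Finset.sum_sub_distrib, ← Finset.mul_sum, ← Finset.sum_mul, ← map_sum, ← map_sum,
      ← U.as_sum] at hs
    have h3 := J.sub_mem hUJ hs
    rw [sub_sub_cancel] at h3
    have h4 := J.mul_mem_left (C (eval ![1, 0, 0] U)⁻¹) h3
    rw [← mul_assoc, ← C_mul, inv_mul_cancel₀ hU0, C_1, one_mul] at h4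
    exact h4

theorem kc_all {K : Type} [Field K] {m D : ℕ} (J : Ideal (MvPolynomial (Fin 3) K))
    (hJ : ∀ a b, m ≤ a + b → (X 1 ^ a * X 2 ^ b : MvPolynomial (Fin 3) K) ∈ J)
    (H : ∀ a b, a + b < m → ∃ U : MvPolynomial (Fin 3) K, U.IsHomogeneous (D - (a + b)) ∧
      eval ![1, 0, 0] U ≠ 0 ∧ X 1 ^ a * X 2 ^ b * U ∈ J)
    (f : MvPolynomial (Fin 3) K) (hf : f.IsHomogeneous D) : f ∈ J := by
  rw [f.as_sum]
  apply J.sum_mem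
  intro e he
  have := hf (mem_support_iff.1 he)
  rw [Finsupp.weight_apply, Finsupp.sum_fintype _ _ (by simp), Fin.sum_univ_three] at this
  rw [monomial_eq, Finsupp.prod_fintype _ _ (by simp), Fin.prod_univ_three]
  apply J.mul_mem_left
  exact kc_monomials J hJ H m _ _ _ (by omega) (by simpa [add_assoc] using this)

/-- The product of powers of line forms. -/
theorem kc_prod {K : Type} [Field K] {s : ℕ} {m : ℕ} (l : Fin s → MvPolynomial (Fin 3) K)
    (hl : ∀ i, (l i).IsHomogeneous 1) (δ : Fin s → ℕ) (hδ : ∀ i, δ i ≤ m) :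
    (∏ i, l i ^ (m - δ i)).IsHomogeneous (m * s - ∑ i, δ i) := by
  have h : ∑ i, (m - δ i) = m * s - ∑ i, δ i := by
    have h2 : ∑ i, (m - δ i) + ∑ i, δ i = m * s := by
      rw [← Finset.sum_add_distrib]
      rw [Finset.sum_congr rfl (fun i _ => Nat.sub_add_cancel (hδ i))]
      simp [mul_comm]
    omega
  rw [← h]
  apply IsHomogeneous.prod
  intro i _
  simpa using (hl i).pow (m - δ i)

theorem kc_prod_mem {K : Type} [Field K] {s : ℕ} {m : ℕ} (l : Fin s → MvPolynomial (Fin 3) K)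
    (δ : Fin s → ℕ) (I : Ideal (MvPolynomial (Fin 3) K)) (j : Fin s) (h : l j ∈ I) :
    (∏ i, l i ^ (m - δ i)) ∈ I ^ (m - δ j) :=
  Ideal.mem_of_dvd _ (Finset.dvd_prod_of_mem (fun i => l i ^ (m - δ i)) (Finset.mem_univ j))
    (Ideal.pow_mem_pow h _)

theorem kc_mul_pow {K : Type} [Field K] {I : Ideal (MvPolynomial (Fin 3) K)}
    {f g : MvPolynomial (Fin 3) K} {a b m : ℕ} (hf : f ∈ I ^ a) (hg : g ∈ I ^ b)
    (h : m ≤ a + b) : f * g ∈ I ^ m := by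
  apply Ideal.pow_le_pow_right h
  rw [pow_add]
  exact Ideal.mul_mem_mul hf hg

theorem kc_prod_eval {K : Type} [Field K] {s : ℕ} {m : ℕ} (l : Fin s → MvPolynomial (Fin 3) K)
    (δ : Fin s → ℕ) (v : Fin 3 → K) (h : ∀ i, m - δ i ≠ 0 → eval v (l i) ≠ 0) :
    eval v (∏ i, l i ^ (m - δ i)) ≠ 0 := by
  rw [map_prod, Finset.prod_ne_zero_iff]
  intro i _
  rw [map_pow]
  by_cases h0 : m - δ i = 0
  · rw [h0]; simp
  · exact pow_ne_zero _ (h i h0)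

/-- Some `X_k` misses the line `x_u = 0`. -/
theorem kc_exists_miss {K : Type} [Field K] {s : ℕ} (hs : 2 ≤ s)
    (X : Set (P2 K)) (Xs : Fin s → Set (P2 K)) (Ls : Fin s → ProjLine K)
    (hX : IsKConfig X (fun i : Fin s => i.1 + 1) Xs Ls) (P : P2 K)
    (o : Fin s) (ho : o.1 = 0) (hX1 : Xs o = {P}) (u : Fin 3) (hPu : P.rep u = 0)
    (hnoline : ∀ L : ProjLine K, (X ∩ L.points).ncard = s → P ∉ L.points) :
    ∃ k, ∀ p ∈ Xs k, p.rep u ≠ 0 := by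
  by_contra hcon
  push Not at hcon
  choose g hg hgu using hcon
  have hfr : Module.finrank K (LinearMap.ker (LinearMap.proj u : (Fin 3 → K) →ₗ[K] K)) = 2 := by
    have h1 := LinearMap.finrank_range_add_finrank_ker (LinearMap.proj u : (Fin 3 → K) →ₗ[K] K)
    have h2 : LinearMap.range (LinearMap.proj u : (Fin 3 → K) →ₗ[K] K) = ⊤ :=
      LinearMap.range_eq_top.2 (LinearMap.proj_surjective u)
    rw [h2] at h1
    simp at h1
    omega
  let L : ProjLine K := ⟨_, hfr⟩
  have hL : ∀ p : P2 K, p ∈ L.points ↔ p.rep u = 0 := by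
    intro p
    rw [kc_mem_points]
    exact LinearMap.mem_ker
  have hinj : Function.Injective g := by
    intro i j hij
    by_contra hne
    rcases lt_or_gt_of_ne hne with h | h
    · exact hX.not_mem j i h _ (hg i) (hij ▸ hX.subset_line j (hg j))
    · exact hX.not_mem i j h _ (hg j) (hij ▸ hX.subset_line i (hg i))
  have hset : X ∩ L.points = Set.range g := by
    ext p
    constructor
    · rintro ⟨hp, hpL⟩
      rw [hX.union_eq, Set.mem_iUnion] at hp
      obtain ⟨i, hi⟩ := hp
      refine ⟨i, ?_⟩
      by_contra hne
      by_cases h0 : i = o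
      · subst i
        have h1 := hg o
        rw [hX1] at hi h1
        exact hne (h1.trans hi.symm)
      · have he := kc_lines_eq hne (hX.subset_line i (hg i)) (hX.subset_line i hi)
          ((hL _).2 (hgu i)) hpL
        refine hX.not_mem i o ?_ P (by rw [hX1]; rfl) ?_
        · rw [Fin.lt_def]
          have : i.1 ≠ 0 := fun h => h0 (Fin.ext (h.trans ho.symm))
          omega
        · rw [kc_mem_points, he, ← kc_mem_points, hL]
          exact hPu
    · rintro ⟨i, rfl⟩
      exact ⟨hX.union_eq ▸ Set.mem_iUnion.2 ⟨i, hg i⟩, (hL _).2 (hgu i)⟩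
  refine hnoline L ?_ ((hL P).2 hPu)
  rw [hset, ← Set.image_univ, Set.ncard_image_of_injective _ hinj]
  simp

theorem kc_caseC {K : Type} [Field K] {s : ℕ} (hs : 2 ≤ s)
    (X' : Set (P2 K)) (Xs : Fin s → Set (P2 K)) (Ls : Fin s → ProjLine K)
    (hX : IsKConfig X' (fun i : Fin s => i.1 + 1) Xs Ls) (P Qt Qu : P2 K)
    (o o1 : Fin s) (ho : o.1 = 0) (ho1 : o1.1 = 1) (hX1 : Xs o = {P}) (hX2 : Xs o1 = {Qt, Qu})
    (l : Fin s → MvPolynomial (Fin 3) K) (hl : ∀ i, (l i).IsHomogeneous 1)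
    (hlX : ∀ i, ∀ p ∈ Xs i, l i ∈ pointIdeal p)
    (hlP : ∀ i : Fin s, i.1 ≠ 0 → eval ![1, 0, 0] (l i) ≠ 0)
    (t u : Fin 3) (hu : u ≠ 0) (hPu : P.rep u = 0) (hQt0 : Qt.rep 0 = 0)
    (hQtu : Qt.rep u = 0) (hQut : Qu.rep t = 0)
    (hnoline : ∀ L : ProjLine K, (X' ∩ L.points).ncard = s → P ∉ L.points)
    (m : ℕ) (hm : s + 1 ≤ m) :
    ∃ U : MvPolynomial (Fin 3) K, U.IsHomogeneous (m * s - 2 - (m - 1)) ∧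
      eval ![1, 0, 0] U ≠ 0 ∧ ∀ i : Fin s, i.1 ≠ 0 → ∀ p ∈ Xs i,
        X t ^ (m - 1) * U ∈ pointIdeal p ^ m := by
  classical
  obtain ⟨k, hk⟩ := kc_exists_miss hs X' Xs Ls hX P o ho hX1 u hPu hnoline
  have hk0 : k.1 ≠ 0 := by
    intro h
    obtain rfl : k = o := Fin.ext (h.trans ho.symm)
    exact hk P (by rw [hX1]; rfl) hPu
  have hk1 : k.1 ≠ 1 := by
    intro h
    obtain rfl : k = o1 := Fin.ext (h.trans ho1.symm)
    exact hk Qt (by rw [hX2]; simp) hQtu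
  have hks := k.2
  have hfin : (Xs k).Finite := Set.finite_of_ncard_ne_zero (by rw [hX.card_eq]; simp)
  have hcard : hfin.toFinset.card = k.1 + 1 := by
    rw [← Set.ncard_eq_toFinset_card _ hfin, hX.card_eq]
  set q : P2 K → MvPolynomial (Fin 3) K := fun R => C (R.rep u) * X 0 - C (R.rep 0) * X u with hq
  have hqh : ∀ R, (q R).IsHomogeneous 1 := by
    intro R
    apply IsHomogeneous.sub
    · simpa using (isHomogeneous_C (Fin 3) (R.rep u)).mul (isHomogeneous_X K 0)
    · simpa using (isHomogeneous_C (Fin 3) (R.rep 0)).mul (isHomogeneous_X K u)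
  have hqR : ∀ R, q R ∈ pointIdeal R := by
    intro R
    apply kc_mem_pointIdeal (hqh R)
    simp [hq, mul_comm]
  have hqQ : ∀ R, q R ∈ pointIdeal Qt := by
    intro R
    apply kc_mem_pointIdeal (hqh R)
    simp [hq, hQt0, hQtu]
  have hqP : ∀ R ∈ Xs k, eval ![1, 0, 0] (q R) ≠ 0 := by
    intro R hR
    have : (![1, 0, 0] : Fin 3 → K) u = 0 := by
      fin_cases u
      · exact absurd rfl hu
      · rfl
      · rfl
    simp [hq, this, hk R hR]
  have hok : o ≠ k := fun h => hk0 (by rw [← h, ho])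
  have ho1k : o1 ≠ k := fun h => hk1 (by rw [← h, ho1])
  have hoo : o ≠ o1 := fun h => by rw [h, ho1] at ho; omega
  set δ : Fin s → ℕ := fun i => (if i = o then m else 0) + (if i = o1 then k.1 + 1 else 0)
    + (if i = k then 1 else 0) with hδ
  have hδo : δ o = m := by simp [hδ, hok, hoo]
  have hδ1 : δ o1 = k.1 + 1 := by simp [hδ, ho1k, hoo.symm]
  have hδk : δ k = 1 := by simp [hδ, ho1k.symm, hok.symm]
  have hδe : ∀ i, i ≠ o → i ≠ o1 → i ≠ k → δ i = 0 := by
    intro i h1 h2 h3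
    simp [hδ, h1, h2, h3]
  have hδle : ∀ i, δ i ≤ m := by
    intro i
    by_cases h1 : i = o
    · rw [h1, hδo]
    by_cases h2 : i = o1
    · rw [h2, hδ1]; omega
    by_cases h3 : i = k
    · rw [h3, hδk]; omega
    rw [hδe i h1 h2 h3]; omega
  have hδs : ∑ i, δ i = m + (k.1 + 1) + 1 := by
    simp [hδ, Finset.sum_add_distrib]
  have hms : m * 3 ≤ m * s := Nat.mul_le_mul_left m (by omega)
  refine ⟨(∏ i, l i ^ (m - δ i)) * ∏ R ∈ hfin.toFinset, q R, ?_, ?_, ?_⟩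
  · have h1 := kc_prod l hl δ hδle
    have h2 : (∏ R ∈ hfin.toFinset, q R).IsHomogeneous (k.1 + 1) := by
      have := IsHomogeneous.prod hfin.toFinset q (fun _ => 1) (fun R _ => hqh R)
      simpa [hcard] using this
    have h3 := h1.mul h2
    convert h3 using 1
    rw [hδs]
    omega
  · rw [map_mul]
    apply mul_ne_zero
    · apply kc_prod_eval
      intro i hi
      apply hlP
      intro h
      apply hi
      obtain rfl : i = o := Fin.ext (h.trans ho.symm)
      rw [hδo]; simp
    · rw [map_prod, Finset.prod_ne_zero_iff]
      intro R hR
      exact hqP R (by simpa using hR)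
  · intro i hi p hp
    have hA := kc_prod_mem (m := m) l δ (pointIdeal p) i (hlX i p hp)
    have hio : i ≠ o := fun h => hi (by rw [h, ho])
    by_cases h2 : i = o1
    · subst h2
      rw [hδ1] at hA
      have hp' : p = Qt ∨ p = Qu := by
        rw [hX2] at hp; simpa using hp
      rcases hp' with rfl | rfl
      · apply Ideal.mul_mem_left
        refine kc_mul_pow (b := k.1 + 1) hA ?_ (by omega)
        rw [← hcard, ← Finset.prod_const]
        exact Ideal.prod_mem_prod (fun R _ => hqQ R)
      · rw [← mul_assoc]
        apply Ideal.mul_mem_right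
        exact kc_mul_pow (Ideal.pow_mem_pow (kc_X_mem hQut) _) hA (by omega)
    by_cases h3 : i = k
    · subst h3
      rw [hδk] at hA
      apply Ideal.mul_mem_left
      refine kc_mul_pow (b := 1) hA ?_ (by omega)
      rw [pow_one]
      exact Ideal.mem_of_dvd _ (Finset.dvd_prod_of_mem q (by simpa using hp)) (hqR p)
    · rw [hδe i hio h2 h3, Nat.sub_zero] at hA
      exact Ideal.mul_mem_left _ _ (Ideal.mul_mem_right _ _ hA)

/-- **Claim in Theorem (case `1 ≤ r < s`).** Let `X` be a k-configuration of
type `(1,2,…,s)`, `s ≥ 2`, with `X₁ = {P}`, `P = [1:0:0]`, and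
`X₂ = {Q₁,Q₂}`, `Q₁ = [0:1:0]`, `Q₂ = [0:0:1]`. Assume no line containing
exactly `s` points of `X` passes through `P`, and set `Y = X \ {P}`. Then for
every `m ≥ s + 1`, every homogeneous polynomial of degree `m·s − 2` lies in
`I_{mY} + I_P^m`; i.e. `(I_{mY} + I_P^m)_{ms−2} = R_{ms−2}`. -/
theorem kconfig_claim_degree_piece {K : Type} [Field K] [IsAlgClosed K] {s : ℕ} (hs : 2 ≤ s)
    (X : Set (P2 K)) (Xs : Fin s → Set (P2 K)) (Ls : Fin s → ProjLine K)
    (hX : IsKConfig X (fun i : Fin s => i.1 + 1) Xs Ls)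
    (P Q₁ Q₂ : P2 K)
    (hP : P = Projectivization.mk K ![1, 0, 0] (by intro h; simpa using congrFun h 0))
    (hQ₁ : Q₁ = Projectivization.mk K ![0, 1, 0] (by intro h; simpa using congrFun h 1))
    (hQ₂ : Q₂ = Projectivization.mk K ![0, 0, 1] (by intro h; simpa using congrFun h 2))
    (hX1 : Xs ⟨0, by omega⟩ = {P}) (hX2 : Xs ⟨1, by omega⟩ = {Q₁, Q₂}) (hQ : Q₁ ≠ Q₂)
    (hnoline : ∀ L : ProjLine K, (X ∩ L.points).ncard = s → P ∉ L.points)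
    (Y : Set (P2 K)) (hY : Y = X \ {P}) :
    ∀ m : ℕ, s + 1 ≤ m →
      ∀ f : MvPolynomial (Fin 3) K, f.IsHomogeneous (m * s - 2) →
        f ∈ fatIdeal Y m + pointIdeal P ^ m := by
  classical
  intro m hm f hf
  have hrep : ∀ (v : Fin 3 → K) (hv : v ≠ 0) (t : Fin 3), v t = 0 →
      (Projectivization.mk K v hv).rep t = 0 := by
    intro v hv t ht
    obtain ⟨a, ha⟩ := Projectivization.exists_smul_eq_mk_rep K v hv
    rw [← ha, Pi.smul_apply, ht, smul_zero]
  have hP1 : P.rep 1 = 0 := by rw [hP]; exact hrep _ _ _ rfl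
  have hP2 : P.rep 2 = 0 := by rw [hP]; exact hrep _ _ _ rfl
  have hQ10 : Q₁.rep 0 = 0 := by rw [hQ₁]; exact hrep _ _ _ rfl
  have hQ12 : Q₁.rep 2 = 0 := by rw [hQ₁]; exact hrep _ _ _ rfl
  have hQ20 : Q₂.rep 0 = 0 := by rw [hQ₂]; exact hrep _ _ _ rfl
  have hQ21 : Q₂.rep 1 = 0 := by rw [hQ₂]; exact hrep _ _ _ rfl
  choose l hl hlv using fun i => kc_lineForm (Ls i)
  have hlX : ∀ i, ∀ p ∈ Xs i, l i ∈ pointIdeal p := by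
    intro i p hp
    apply kc_mem_pointIdeal (hl i)
    rw [hlv, ← kc_mem_points]
    exact hX.subset_line i hp
  have hlP : ∀ i : Fin s, i.1 ≠ 0 → eval ![1, 0, 0] (l i) ≠ 0 := by
    intro i hi h
    rw [hlv] at h
    apply hX.not_mem i ⟨0, by omega⟩ (by rw [Fin.lt_def]; simp only; omega) P (by rw [hX1]; rfl)
    rw [kc_mem_points, hP]
    obtain ⟨a, ha⟩ := Projectivization.exists_smul_eq_mk_rep K (![1, 0, 0] : Fin 3 → K)
      (by intro h; simpa using congrFun h 0)
    rw [← ha]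
    exact Submodule.smul_of_tower_mem _ a h
  have hfat : ∀ g : MvPolynomial (Fin 3) K,
      (∀ i : Fin s, i.1 ≠ 0 → ∀ p ∈ Xs i, g ∈ pointIdeal p ^ m) →
      g ∈ fatIdeal Y m + pointIdeal P ^ m := by
    intro g hg
    apply Ideal.mem_sup_left
    unfold fatIdeal
    simp only [Submodule.mem_iInf]
    intro p hp
    rw [hY, hX.union_eq] at hp
    obtain ⟨hp1, hp2⟩ := hp
    obtain ⟨i, hi⟩ := Set.mem_iUnion.1 hp1
    refine hg i ?_ p hi
    intro h
    obtain rfl : i = ⟨0, lt_of_lt_of_le Nat.zero_lt_two hs⟩ := Fin.ext h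
    rw [hX1] at hi
    exact hp2 hi
  have hms : m * 2 ≤ m * s := Nat.mul_le_mul_left m hs
  refine kc_all (m := m) (D := m * s - 2) _ ?_ ?_ f hf
  · intro a b hab
    apply Ideal.mem_sup_right
    exact kc_mul_pow (Ideal.pow_mem_pow (kc_X_mem hP1) a) (Ideal.pow_mem_pow (kc_X_mem hP2) b) hab
  · intro a b hab
    by_cases h1 : a + b + 2 ≤ m
    · set δ : Fin s → ℕ := fun i => if i = ⟨0, by omega⟩ then m else 0 with hδ
      have hδs : ∑ i, δ i = m := by simp [hδ]
      refine ⟨(∏ i, l i ^ (m - δ i)) * MvPolynomial.X 0 ^ (m - 2 - (a + b)), ?_, ?_, ?_⟩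
      · have h3 := (kc_prod (m := m) l hl δ (by intro i; simp only [hδ]; split_ifs <;> omega)).mul
          ((isHomogeneous_X K (0 : Fin 3)).pow (m - 2 - (a + b)))
        convert h3 using 1
        rw [hδs]; omega
      · rw [map_mul]
        apply mul_ne_zero
        · apply kc_prod_eval
          intro i hi
          apply hlP
          intro h
          apply hi
          have : i = ⟨0, by omega⟩ := Fin.ext h
          simp [hδ, this]
        · simp
      · apply hfat
        intro i hi p hp
        apply Ideal.mul_mem_left
        apply Ideal.mul_mem_right
        have hA := kc_prod_mem (m := m) l δ (pointIdeal p) i (hlX i p hp)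
        have : i ≠ ⟨0, by omega⟩ := fun h => hi (by rw [h])
        simpa [hδ, this] using hA
    by_cases ha : a = 0
    · obtain ⟨U, hU, hU0, hUm⟩ := kc_caseC hs X Xs Ls hX P Q₂ Q₁ _ _ rfl rfl hX1
        (by rw [hX2, Set.pair_comm]) l hl hlX hlP 2 1 (by decide) hP1 hQ20 hQ21 hQ12 hnoline m hm
      have hb : b = m - 1 := by omega
      subst ha hb
      refine ⟨U, by simpa using hU, hU0, hfat _ ?_⟩
      simpa using hUm
    by_cases hb : b = 0
    · obtain ⟨U, hU, hU0, hUm⟩ := kc_caseC hs X Xs Ls hX P Q₁ Q₂ _ _ rfl rfl hX1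
        hX2 l hl hlX hlP 1 2 (by decide) hP2 hQ10 hQ12 hQ21 hnoline m hm
      have ha : a = m - 1 := by omega
      subst ha hb
      refine ⟨U, by simpa using hU, hU0, hfat _ ?_⟩
      simpa using hUm
    · set δ : Fin s → ℕ := fun i => (if i = ⟨0, by omega⟩ then m else 0) +
        (if i = ⟨1, by omega⟩ then 1 else 0) with hδ
      have hδs : ∑ i, δ i = m + 1 := by simp [hδ, Finset.sum_add_distrib]
      have hδ0 : δ ⟨0, by omega⟩ = m := by simp [hδ]
      have hδ1 : δ ⟨1, by omega⟩ = 1 := by simp [hδ]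
      have hδe : ∀ i : Fin s, i.1 ≠ 0 → i.1 ≠ 1 → δ i = 0 := by
        intro i h1 h2
        simp [hδ, Fin.ext_iff, h1, h2]
      have hδle : ∀ i, δ i ≤ m := by
        intro i
        by_cases h1 : i.1 = 0
        · obtain rfl : i = ⟨0, lt_of_lt_of_le Nat.zero_lt_two hs⟩ := Fin.ext h1
          rw [hδ0]
        by_cases h2 : i.1 = 1
        · obtain rfl : i = ⟨1, lt_of_lt_of_le Nat.one_lt_two hs⟩ := Fin.ext h2
          rw [hδ1]; omega
        rw [hδe i h1 h2]; omega
      refine ⟨∏ i, l i ^ (m - δ i), ?_, ?_, ?_⟩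
      · have h3 := kc_prod (m := m) l hl δ hδle
        convert h3 using 1
        rw [hδs]; omega
      · apply kc_prod_eval
        intro i hi
        apply hlP
        intro h
        apply hi
        obtain rfl : i = ⟨0, lt_of_lt_of_le Nat.zero_lt_two hs⟩ := Fin.ext h
        rw [hδ0]; simp
      · apply hfat
        intro i hi p hp
        have hA := kc_prod_mem (m := m) l δ (pointIdeal p) i (hlX i p hp)
        by_cases h2 : i.1 = 1
        · obtain rfl : i = ⟨1, lt_of_lt_of_le Nat.one_lt_two hs⟩ := Fin.ext h2
          rw [hδ1] at hA
          refine kc_mul_pow (a := 1) ?_ hA (by omega)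
          rw [pow_one]
          rw [hX2] at hp
          rcases hp with rfl | rfl
          · exact Ideal.mul_mem_left _ _
              (Ideal.pow_mem_of_mem _ (kc_X_mem hQ12) _ (by omega))
          · exact Ideal.mul_mem_right _ _
              (Ideal.pow_mem_of_mem _ (kc_X_mem hQ21) _ (by omega))
        · rw [hδe i hi h2, Nat.sub_zero] at hA
          exact Ideal.mul_mem_left _ _ hA
end

section
/- Let X ⊆ P² be a k-configuration of type (d₁,…,d_s). Then for every integer m ≥ s + 1, the regularity index of the fat point scheme mX is ri(mX) = m·d_s − 1. -/
namespace KConf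
open MvPolynomial

variable {K : Type} [Field K]

/-- The linear form attached to a functional. -/
noncomputable def lin (φ : Module.Dual K (Fin 3 → K)) : MvPolynomial (Fin 3) K :=
  ∑ i, C (φ (Pi.single i 1)) * X i

lemma dual_apply (φ : Module.Dual K (Fin 3 → K)) (v : Fin 3 → K) :
    φ v = ∑ i, φ (Pi.single i 1) * v i := by
  conv_lhs => rw [LinearMap.pi_apply_eq_sum_univ φ v]
  refine Finset.sum_congr rfl fun i _ => ?_
  rw [smul_eq_mul, mul_comm]
  congr 2
  ext j
  simp [Pi.single_apply, eq_comm]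

lemma lin_hom (φ : Module.Dual K (Fin 3 → K)) : (lin φ).IsHomogeneous 1 := by
  unfold lin
  exact IsHomogeneous.sum _ _ _ fun i _ => isHomogeneous_C_mul_X _ _

lemma eval_lin (φ : Module.Dual K (Fin 3 → K)) (v : Fin 3 → K) :
    eval v (lin φ) = φ v := by
  rw [dual_apply]; simp [lin]

lemma lin_ne_zero {φ : Module.Dual K (Fin 3 → K)} (h : φ ≠ 0) : lin φ ≠ 0 := by
  intro h0
  apply h
  refine LinearMap.ext fun v => ?_
  rw [← eval_lin, h0]; simp

lemma lin_mem {φ : Module.Dual K (Fin 3 → K)} {p : P2 K} (h : φ p.rep = 0) :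
    lin φ ∈ pointIdeal p :=
  Ideal.subset_span ⟨lin_hom φ, by rw [eval_lin, h]⟩

/-- Every form of degree one comes from a functional. -/
lemma exists_lin {f : MvPolynomial (Fin 3) K} (hf : f.IsHomogeneous 1) :
    ∃ φ : Module.Dual K (Fin 3 → K), lin φ = f := by
  have h : f ∈ homogeneousSubmodule (Fin 3) K 1 := hf
  rw [homogeneousSubmodule_one_eq_span_X] at h
  refine Submodule.span_induction ?_ ?_ ?_ ?_ h
  · rintro _ ⟨i, rfl⟩
    refine ⟨LinearMap.proj i, ?_⟩
    simp [lin, Pi.single_apply]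
  · exact ⟨0, by simp [lin]⟩
  · rintro _ _ _ _ ⟨a, rfl⟩ ⟨b, rfl⟩
    exact ⟨a + b, by simp [lin, add_mul, Finset.sum_add_distrib]⟩
  · rintro c _ _ ⟨a, rfl⟩
    exact ⟨c • a, by simp [lin, Finset.mul_sum, mul_assoc, MvPolynomial.smul_eq_C_mul]⟩

/-- The degeneration map at a point `v` with `l v = 1`. -/
noncomputable def psi (v : Fin 3 → K) (l : Module.Dual K (Fin 3 → K)) :
    MvPolynomial (Fin 3) K →ₐ[K] Polynomial (MvPolynomial (Fin 3) K) :=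
  aeval fun i => Polynomial.C (C (v i) * lin l) + Polynomial.X * Polynomial.C (X i - C (v i) * lin l)

lemma psi_lin (v : Fin 3 → K) (l φ : Module.Dual K (Fin 3 → K)) :
    psi v l (lin φ) = Polynomial.C (C (φ v) * lin l) +
      Polynomial.X * Polynomial.C (lin φ - C (φ v) * lin l) := by
  have h : C (φ v) = ∑ i, C (φ (Pi.single i 1)) * (C (v i) : MvPolynomial (Fin 3) K) := by
    rw [dual_apply]; simp
  have h2 : psi v l (lin φ) = ∑ i, Polynomial.C (C (φ (Pi.single i 1))) *
     (Polynomial.C (C (v i) * lin l) + Polynomial.X * Polynomial.C (X i - C (v i) * lin l)) := by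
    conv_lhs => rw [lin]
    simp [psi, Polynomial.algebraMap_apply]
  rw [h2, h]
  conv_rhs => rw [show lin φ = ∑ i, C (φ (Pi.single i 1)) * X i from rfl]
  simp only [Finset.sum_mul, ← Finset.sum_sub_distrib, map_sum, Finset.mul_sum,
    ← Finset.sum_add_distrib]
  refine Finset.sum_congr rfl fun i _ => ?_
  simp only [map_mul, map_sub]
  ring

lemma exists_l (p : P2 K) : ∃ l : Module.Dual K (Fin 3 → K), l p.rep = 1 := by
  obtain ⟨f, hf⟩ := Module.Projective.exists_dual_ne_zero K p.rep_nonzero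
  exact ⟨(f p.rep)⁻¹ • f, by simp [hf]⟩

lemma psi_dvd {p : P2 K} {l : Module.Dual K (Fin 3 → K)} {m : ℕ}
    {f : MvPolynomial (Fin 3) K} (hf : f ∈ pointIdeal p ^ m) :
    Polynomial.X ^ m ∣ psi p.rep l f := by
  have h1 : (pointIdeal p).map (psi p.rep l) ≤ Ideal.span {Polynomial.X} := by
    rw [pointIdeal, Ideal.map_span, Ideal.span_le]
    rintro _ ⟨g, ⟨hg, hg0⟩, rfl⟩
    obtain ⟨φ, rfl⟩ := exists_lin hg
    rw [eval_lin] at hg0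
    simp only [SetLike.mem_coe, Ideal.mem_span_singleton]
    rw [psi_lin, hg0]
    simp
  have h2 := Ideal.mem_map_of_mem (psi p.rep l) hf
  rw [Ideal.map_pow] at h2
  have h3 := Ideal.pow_right_mono h1 m h2
  rwa [Ideal.span_singleton_pow, Ideal.mem_span_singleton] at h3

lemma psi_rees {p : P2 K} {l : Module.Dual K (Fin 3 → K)} (hl : l p.rep = 1)
    (f : MvPolynomial (Fin 3) K) (i : ℕ) : (psi p.rep l f).coeff i ∈ pointIdeal p ^ i := by
  have : psi p.rep l f ∈ (reesAlgebra (pointIdeal p)).restrictScalars K := by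
    induction f using MvPolynomial.induction_on with
    | C a =>
      have : psi p.rep l (C a) = algebraMap K _ a := (psi p.rep l).commutes a
      rw [this]; exact Subalgebra.algebraMap_mem _ _
    | add f g hf hg => rw [map_add]; exact add_mem hf hg
    | mul_X f i hf =>
      rw [map_mul]
      refine mul_mem hf ?_
      simp only [psi, aeval_X]
      refine add_mem ?_ ?_
      · exact Subalgebra.algebraMap_mem (reesAlgebra (pointIdeal p)) _
      · rw [mul_comm, ← pow_one Polynomial.X, Polynomial.C_mul_X_pow_eq_monomial]
        change _ ∈ reesAlgebra _
        rw [reesAlgebra.monomial_mem, pow_one]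
        refine Ideal.subset_span ⟨?_, ?_⟩
        · exact (isHomogeneous_X _ _).sub ((lin_hom l).C_mul _)
        · simp [eval_lin, hl]
  exact this i

lemma psi_eval_one (v : Fin 3 → K) (l : Module.Dual K (Fin 3 → K))
    (f : MvPolynomial (Fin 3) K) : (psi v l f).eval 1 = f := by
  have : ((Polynomial.aeval (1 : MvPolynomial (Fin 3) K)).restrictScalars K).comp (psi v l)
      = AlgHom.id K _ := by
    ext i
    simp [psi]
  have h := DFunLike.congr_fun this f
  simpa [Polynomial.coe_aeval_eq_eval] using h

lemma mem_pow_iff {p : P2 K} {l : Module.Dual K (Fin 3 → K)} (hl : l p.rep = 1) {m : ℕ}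
    {f : MvPolynomial (Fin 3) K} : f ∈ pointIdeal p ^ m ↔ Polynomial.X ^ m ∣ psi p.rep l f := by
  refine ⟨psi_dvd, fun h => ?_⟩
  rw [Polynomial.X_pow_dvd_iff] at h
  rw [← psi_eval_one p.rep l f, Polynomial.eval_eq_sum_range]
  refine Ideal.sum_mem _ fun i _ => ?_
  rw [one_pow, mul_one]
  by_cases hi : i < m
  · rw [h i hi]; exact zero_mem _
  · exact Ideal.pow_le_pow_right (not_lt.mp hi) (psi_rees hl f i)

lemma colon_of_ne {p : P2 K} {φ : Module.Dual K (Fin 3 → K)} (h : φ p.rep ≠ 0) {m : ℕ}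
    {g : MvPolynomial (Fin 3) K} (hg : lin φ * g ∈ pointIdeal p ^ m) : g ∈ pointIdeal p ^ m := by
  obtain ⟨l, hl⟩ := exists_l p
  rw [mem_pow_iff hl] at hg ⊢
  rw [map_mul] at hg
  refine Polynomial.prime_X.pow_dvd_of_dvd_mul_left _ ?_ hg
  rw [psi_lin, Polynomial.X_dvd_iff]
  have : lin l ≠ 0 := lin_ne_zero (by rintro rfl; simp at hl)
  simp [this, h]

lemma colon_of_eq {p : P2 K} {φ : Module.Dual K (Fin 3 → K)} (h0 : φ ≠ 0) (h : φ p.rep = 0) {m : ℕ}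
    {g : MvPolynomial (Fin 3) K} (hg : lin φ * g ∈ pointIdeal p ^ m) :
    g ∈ pointIdeal p ^ (m - 1) := by
  obtain ⟨l, hl⟩ := exists_l p
  rw [mem_pow_iff hl] at hg ⊢
  rw [map_mul, psi_lin, h] at hg
  rcases m with _ | m
  · simp
  refine Polynomial.prime_X.pow_dvd_of_dvd_mul_left (a := Polynomial.C (lin φ)) _ ?_ ?_
  · rw [Polynomial.X_dvd_iff]; simpa using lin_ne_zero h0
  · simp only [map_zero, zero_mul, sub_zero, zero_add, pow_succ', mul_assoc] at hg
    exact (mul_dvd_mul_iff_left Polynomial.X_ne_zero).mp hg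

end KConf

namespace KConf
open MvPolynomial

variable {K : Type} [Field K]

/-- Forms of degree `T - 1` (zero for `T = 0`). -/
noncomputable def Rm (K : Type) [Field K] : ℕ → Submodule K (MvPolynomial (Fin 3) K)
  | 0 => ⊥
  | t + 1 => homogeneousSubmodule (Fin 3) K t

instance (T : ℕ) : Module.Finite K (Rm K T) := by
  cases T with
  | zero => exact inferInstanceAs (Module.Finite K (⊥ : Submodule K (MvPolynomial (Fin 3) K)))
  | succ t => exact Module.Finite.iff_fg.mpr (homogeneousSubmodule_fg (Fin 3) K t)

lemma finrank_homog (t : ℕ) :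
    Module.finrank K (homogeneousSubmodule (Fin 3) K t) = (t + 2).choose 2 := by
  rw [homogeneousSubmodule_eq_finsupp_supported]
  have : {d : Fin 3 →₀ ℕ | d.degree = t} =
      ((Finset.univ : Finset (Fin 3)).finsuppAntidiag t : Set _) := by
    ext d
    simp [Finsupp.degree_eq_sum]
  rw [this]
  have h := Module.finrank_eq_nat_card_basis (basisRestrictSupport K
    (((Finset.univ : Finset (Fin 3)).finsuppAntidiag t : Finset (Fin 3 →₀ ℕ)) : Set (Fin 3 →₀ ℕ)))
  refine Eq.trans h ?_
  rw [Nat.card_coe_set_eq, Set.ncard_coe_finset, Finset.card_finsuppAntidiag_nat_eq_choose]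
  simp only [Finset.card_univ, Fintype.card_fin]
  rw [show 3 + t - 1 = t + 2 by omega, ← Nat.choose_symm (by omega : t ≤ t + 2)]
  congr 1; omega

lemma finrank_Rm (T : ℕ) : Module.finrank K (Rm K T) = (T + 1).choose 2 := by
  cases T with
  | zero => exact finrank_bot K (MvPolynomial (Fin 3) K)
  | succ t => exact finrank_homog t

lemma lin_mul_mem_Rm (φ : Module.Dual K (Fin 3 → K)) {T : ℕ} {f : MvPolynomial (Fin 3) K}
    (hf : f ∈ Rm K T) : lin φ * f ∈ Rm K (T + 1) := by
  cases T with
  | zero => 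
    have : f = 0 := hf
    rw [this, mul_zero]; exact zero_mem _
  | succ t =>
    have h := (lin_hom φ).mul (show f.IsHomogeneous t from hf)
    rw [add_comm] at h
    exact h

/-- General fat point ideals. -/
noncomputable def FI (X : Finset (P2 K)) (μ : P2 K → ℕ) : Ideal (MvPolynomial (Fin 3) K) :=
  ⨅ p ∈ X, pointIdeal p ^ μ p

lemma mem_FI {X : Finset (P2 K)} {μ : P2 K → ℕ} {f : MvPolynomial (Fin 3) K} :
    f ∈ FI X μ ↔ ∀ p ∈ X, f ∈ pointIdeal p ^ μ p := by
  simp [FI]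

/-- The graded piece of an ideal. -/
noncomputable def gp (I : Ideal (MvPolynomial (Fin 3) K)) (T : ℕ) :
    Submodule K (MvPolynomial (Fin 3) K) :=
  Submodule.restrictScalars K I ⊓ Rm K T

lemma mem_gp {I : Ideal (MvPolynomial (Fin 3) K)} {T : ℕ} {f : MvPolynomial (Fin 3) K} :
    f ∈ gp I T ↔ f ∈ I ∧ f ∈ Rm K T := Iff.rfl

lemma gp_le (I : Ideal (MvPolynomial (Fin 3) K)) (T : ℕ) : gp I T ≤ Rm K T := inf_le_right

instance (I : Ideal (MvPolynomial (Fin 3) K)) (T : ℕ) : Module.Finite K (gp I T) :=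
  Submodule.finiteDimensional_of_le (gp_le I T)

/-- Dimension of the graded piece. -/
noncomputable def vv (I : Ideal (MvPolynomial (Fin 3) K)) (T : ℕ) : ℕ := Module.finrank K (gp I T)

lemma vv_le (I : Ideal (MvPolynomial (Fin 3) K)) (T : ℕ) : vv I T ≤ (T + 1).choose 2 := by
  rw [← finrank_Rm (K := K)]; exact Submodule.finrank_mono (gp_le I T)

lemma hilb_eq (I : Ideal (MvPolynomial (Fin 3) K)) (t : ℕ) :
    hilb I t = (t + 2).choose 2 - vv I (t + 1) := by
  unfold hilb
  rw [finrank_homog]; rfl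

/-- Codimensions are subadditive. -/
lemma codim_inf (I J : Ideal (MvPolynomial (Fin 3) K)) (T : ℕ) :
    vv I T + vv J T ≤ vv (I ⊓ J) T + (T + 1).choose 2 := by
  have h := Submodule.finrank_sup_add_finrank_inf_eq (gp I T) (gp J T)
  have h2 : gp I T ⊓ gp J T = gp (I ⊓ J) T := by
    ext f; simp only [Submodule.mem_inf, mem_gp]; tauto
  have h3 : Module.finrank K ↥(gp I T ⊔ gp J T) ≤ (T + 1).choose 2 := by
    rw [← finrank_Rm (K := K)]
    exact Submodule.finrank_mono (sup_le (gp_le I T) (gp_le J T))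
  rw [h2] at h
  unfold vv
  omega

/-- multiplication by a linear form, as a linear map -/
noncomputable def ml (φ : Module.Dual K (Fin 3 → K)) :
    MvPolynomial (Fin 3) K →ₗ[K] MvPolynomial (Fin 3) K := LinearMap.mulLeft K (lin φ)

lemma ml_apply (φ : Module.Dual K (Fin 3 → K)) (f : MvPolynomial (Fin 3) K) :
    ml φ f = lin φ * f := rfl

lemma ml_inj {φ : Module.Dual K (Fin 3 → K)} (h : φ ≠ 0) : Function.Injective (ml φ) := by
  intro f g hfg
  exact mul_left_cancel₀ (lin_ne_zero h) hfg

open Classical in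
/-- Multiplicities after removing the line `φ = 0`. -/
noncomputable def resid (φ : Module.Dual K (Fin 3 → K)) (μ : P2 K → ℕ) : P2 K → ℕ :=
  fun p => if φ p.rep = 0 then μ p - 1 else μ p

lemma vv_resid_le (X : Finset (P2 K)) (μ : P2 K → ℕ) {φ : Module.Dual K (Fin 3 → K)} (h : φ ≠ 0)
    (T : ℕ) : vv (FI X (resid φ μ)) T ≤ vv (FI X μ) (T + 1) := by
  have h1 : (gp (FI X (resid φ μ)) T).map (ml φ) ≤ gp (FI X μ) (T + 1) := by
    rintro _ ⟨f, ⟨hf, hfT⟩, rfl⟩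
    refine ⟨?_, lin_mul_mem_Rm φ hfT⟩
    have hf' := mem_FI.mp hf
    refine mem_FI.mpr fun p hp => ?_
    have := hf' p hp
    unfold resid at this
    rw [ml_apply]
    split_ifs at this with h0
    · rcases hμ : μ p with _ | n
      · simp
      · rw [hμ] at this
        rw [pow_succ']
        exact Ideal.mul_mem_mul (lin_mem h0) this
    · exact Ideal.mul_mem_left _ _ this
  calc _ = Module.finrank K ((gp (FI X (resid φ μ)) T).map (ml φ)) :=
        (Submodule.equivMapOfInjective _ (ml_inj h) _).finrank_eq
    _ ≤ _ := Submodule.finrank_mono h1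

/-- A form divisible by `lin φ` and lying in the fat ideal comes from the residual. -/
lemma mem_resid {X : Finset (P2 K)} {μ : P2 K → ℕ} {φ : Module.Dual K (Fin 3 → K)} (h : φ ≠ 0)
    {g : MvPolynomial (Fin 3) K} (hg : lin φ * g ∈ FI X μ) : g ∈ FI X (resid φ μ) := by
  rw [mem_FI] at hg ⊢
  intro p hp
  unfold resid
  split_ifs with h0
  · exact colon_of_eq h h0 (hg p hp)
  · exact colon_of_ne h0 (hg p hp)

end KConf

namespace KConf
open MvPolynomial

variable {K : Type} [Field K]

/-- Powers of point ideals, in large degree: everything is a multiple of `lin l` modulo the ideal. -/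
lemma exists_sub_mem {p : P2 K} {l : Module.Dual K (Fin 3 → K)} (hl : l p.rep = 1) {T : ℕ}
    {f : MvPolynomial (Fin 3) K} (hf : f ∈ Rm K (T + 2)) :
    ∃ g ∈ Rm K (T + 1), f - lin l * g ∈ pointIdeal p ^ (T + 1) := by
  have hfh : f.IsHomogeneous (T + 1) := hf
  let τ : MvPolynomial (Fin 3) K →ₐ[K] MvPolynomial (Fin 3) K :=
    aeval fun i => X i - C (p.rep i) * lin l
  have hτ1 : ∀ i, (X i - C (p.rep i) * lin l).IsHomogeneous 1 := fun i =>
    (isHomogeneous_X _ _).sub ((lin_hom l).C_mul _)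
  have hτ : (τ f).IsHomogeneous (T + 1) := by
    have := hfh.aeval (fun i => X i - C (p.rep i) * lin l) hτ1
    rw [one_mul] at this
    exact this
  have hmem : τ f ∈ pointIdeal p ^ (T + 1) := by
    have h1 : f ∈ idealOfVars (Fin 3) K ^ (T + 1) := by
      rw [mem_pow_idealOfVars_iff']
      intro x hx
      exact hfh.coeff_eq_zero (by omega)
    have h2 := Ideal.mem_map_of_mem τ h1
    rw [Ideal.map_pow] at h2
    refine Ideal.pow_right_mono ?_ _ h2
    rw [idealOfVars, Ideal.map_span, Ideal.span_le]
    rintro _ ⟨_, ⟨i, rfl⟩, rfl⟩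
    refine Ideal.subset_span ⟨?_, ?_⟩
    · simpa [τ] using hτ1 i
    · simp [τ, eval_lin, hl]
  have hdvd : lin l ∣ f - τ f := by
    rw [← Ideal.mem_span_singleton, ← Ideal.Quotient.eq]
    have : (Ideal.Quotient.mkₐ K (Ideal.span {lin l})) =
        (Ideal.Quotient.mkₐ K (Ideal.span {lin l})).comp τ := by
      ext i
      simp only [Ideal.Quotient.mkₐ_eq_mk, AlgHom.comp_apply, τ, aeval_X]
      rw [Ideal.Quotient.eq, Ideal.mem_span_singleton]
      exact ⟨C (p.rep i), by ring⟩
    exact DFunLike.congr_fun this f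
  obtain ⟨g, hg⟩ := hdvd
  refine ⟨homogeneousComponent T g, homogeneousComponent_isHomogeneous _ _, ?_⟩
  have h3 : lin l * homogeneousComponent T g = f - τ f := by
    have h4 : homogeneousComponent (1 + T) (lin l * g) = lin l * homogeneousComponent T g := by
      conv_lhs => rw [← sum_homogeneousComponent g]
      rw [Finset.mul_sum, map_sum]
      have h5 : ∀ j, homogeneousComponent (1 + T) (lin l * homogeneousComponent j g) =
          if T = j then lin l * homogeneousComponent T g else 0 := by
        intro j
        rw [homogeneousComponent_of_mem ((lin_hom l).mul (homogeneousComponent_isHomogeneous j g))]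
        by_cases hj : T = j
        · subst hj; simp
        · rw [if_neg (by omega), if_neg hj]
      simp only [h5, Finset.sum_ite_eq, Finset.mem_range]
      split_ifs with hT
      · rfl
      · rw [homogeneousComponent_eq_zero _ _ (by omega), mul_zero]
    rw [← h4, ← hg, add_comm]
    exact homogeneousComponent_eq_self (hfh.sub hτ)
  rw [h3, sub_sub_cancel]
  exact hmem

lemma vv_point_step (p : P2 K) {m T : ℕ} (hm : m ≤ T + 1) :
    (T + 3).choose 2 + vv (pointIdeal p ^ m) (T + 1) ≤
      (T + 2).choose 2 + vv (pointIdeal p ^ m) (T + 2) := by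
  obtain ⟨l, hl⟩ := exists_l p
  have hl0 : l ≠ 0 := by rintro rfl; simp at hl
  set A := (Rm K (T + 1)).map (ml l) with hA
  set B := gp (pointIdeal p ^ m) (T + 2) with hB
  have hsup : A ⊔ B = Rm K (T + 2) := by
    apply le_antisymm
    · refine sup_le ?_ (gp_le _ _)
      rintro _ ⟨g, hg, rfl⟩
      exact lin_mul_mem_Rm l hg
    · intro f hf
      obtain ⟨g, hg, hfg⟩ := exists_sub_mem hl hf
      refine Submodule.mem_sup.mpr ⟨ml l g, ⟨g, hg, rfl⟩, f - lin l * g, ⟨?_, ?_⟩, ?_⟩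
      · exact Ideal.pow_le_pow_right hm hfg
      · exact sub_mem hf (lin_mul_mem_Rm l hg)
      · rw [ml_apply]; ring
  have hinf : (gp (pointIdeal p ^ m) (T + 1)).map (ml l) ≤ A ⊓ B := by
    rintro _ ⟨g, ⟨hg, hgT⟩, rfl⟩
    exact ⟨⟨g, hgT, rfl⟩, Ideal.mul_mem_left _ _ hg, lin_mul_mem_Rm l hgT⟩
  have e1 : Module.finrank K A = (T + 2).choose 2 := by
    rw [← finrank_Rm (K := K)]
    exact (Submodule.equivMapOfInjective _ (ml_inj hl0) _).finrank_eq.symm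
  have e2 : vv (pointIdeal p ^ m) (T + 1) ≤ Module.finrank K ↥(A ⊓ B) := by
    refine le_trans (Submodule.equivMapOfInjective _ (ml_inj hl0) _).finrank_eq.le ?_
    have : Module.Finite K ↥(A ⊓ B) :=
      Submodule.finiteDimensional_of_le (inf_le_right : A ⊓ B ≤ B)
    exact Submodule.finrank_mono hinf
  have : Module.Finite K A := Module.Finite.map _ _
  have h := Submodule.finrank_sup_add_finrank_inf_eq A B
  rw [hsup, finrank_Rm, e1, show T + 2 + 1 = T + 3 from rfl] at h
  have : Module.finrank K B = vv (pointIdeal p ^ m) (T + 2) := rfl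
  omega

lemma choose_two_succ (n : ℕ) : (n + 1).choose 2 = n.choose 2 + n := by
  rw [Nat.choose_succ_succ' n 1]; simp; ring

lemma vv_point (p : P2 K) (m T : ℕ) :
    (T + 1).choose 2 ≤ vv (pointIdeal p ^ m) T + (m + 1).choose 2 := by
  by_cases h : T ≤ m
  · have := Nat.choose_le_choose 2 (show T + 1 ≤ m + 1 by omega)
    omega
  · rcases m with _ | m
    · have : gp (pointIdeal p ^ 0) T = Rm K T := by simp [gp]
      have : vv (pointIdeal p ^ 0) T = (T + 1).choose 2 := by
        rw [vv, this, finrank_Rm]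
      omega
    obtain ⟨n, rfl⟩ := Nat.exists_eq_add_of_le (show m + 1 ≤ T by omega)
    clear h
    induction n with
    | zero => simp
    | succ n ih =>
      have := vv_point_step p (show m + 1 ≤ (m + n) + 1 by omega)
      have e1 : m + 1 + n = m + n + 1 := by omega
      have e2 : m + 1 + (n + 1) = m + n + 2 := by omega
      rw [e1] at ih
      rw [e2]
      simp only [add_assoc, Nat.reduceAdd] at *
      omega

/-- The expected degree. -/
def dg (X : Finset (P2 K)) (μ : P2 K → ℕ) : ℕ := ∑ p ∈ X, (μ p + 1).choose 2

lemma vv_ge (X : Finset (P2 K)) (μ : P2 K → ℕ) (T : ℕ) :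
    (T + 1).choose 2 ≤ vv (FI X μ) T + dg X μ := by
  classical
  induction X using Finset.induction_on with
  | empty =>
    have : vv (FI (∅ : Finset (P2 K)) μ) T = (T + 1).choose 2 := by
      have : gp (FI (∅ : Finset (P2 K)) μ) T = Rm K T := by simp [gp, FI]
      rw [vv, this, finrank_Rm]
    omega
  | insert p X hp ih =>
    have h1 : FI (insert p X) μ = pointIdeal p ^ μ p ⊓ FI X μ := by
      unfold FI; rw [Finset.iInf_insert]
    have h2 := codim_inf (pointIdeal p ^ μ p) (FI X μ) T
    have h3 := vv_point p (μ p) T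
    rw [← h1] at h2
    have h4 : dg (insert p X) μ = (μ p + 1).choose 2 + dg X μ := by
      simp [dg, Finset.sum_insert hp]
    omega

open Classical in
lemma dg_resid (X : Finset (P2 K)) (μ : P2 K → ℕ) (φ : Module.Dual K (Fin 3 → K)) :
    dg X μ = dg X (resid φ μ) + ∑ p ∈ X with φ p.rep = 0, μ p := by
  unfold dg
  rw [Finset.sum_filter, ← Finset.sum_add_distrib]
  refine Finset.sum_congr rfl fun p _ => ?_
  unfold resid
  split_ifs
  · rcases μ p with _ | n
    · simp
    · simp [choose_two_succ (n + 1)]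
  · simp

end KConf

namespace KConf
open MvPolynomial

variable {K : Type} [Field K]

/-- Restriction to the parametrized line `w + x u`. -/
noncomputable def rho (w u : Fin 3 → K) : MvPolynomial (Fin 3) K →ₐ[K] Polynomial K :=
  aeval fun i => Polynomial.C (w i) + Polynomial.C (u i) * Polynomial.X

lemma rho_lin (w u : Fin 3 → K) (φ : Module.Dual K (Fin 3 → K)) :
    rho w u (lin φ) = Polynomial.C (φ w) + Polynomial.C (φ u) * Polynomial.X := by
  rw [dual_apply φ w, dual_apply φ u]
  simp only [lin, rho, map_sum, map_mul, aeval_X, Finset.sum_mul, ← Finset.sum_add_distrib]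
  refine Finset.sum_congr rfl fun i _ => ?_
  rw [← MvPolynomial.algebraMap_eq, AlgHom.commutes, Polynomial.algebraMap_apply]
  simp only [Algebra.algebraMap_self, RingHom.id_apply]
  ring

lemma rho_degree {w u : Fin 3 → K} {T : ℕ} {f : MvPolynomial (Fin 3) K} (hf : f ∈ Rm K (T + 1)) :
    rho w u f ∈ Polynomial.degreeLT K (T + 1) := by
  rw [Polynomial.mem_degreeLT]
  have hf' : f.IsHomogeneous T := hf
  have h := MvPolynomial.aeval_natDegree_le f hf'.totalDegree_le
    (fun i => Polynomial.C (w i) + Polynomial.C (u i) * Polynomial.X) (n := 1) (fun i => by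
      rw [add_comm]; exact Polynomial.natDegree_linear_le)
  rw [mul_one] at h
  refine lt_of_le_of_lt Polynomial.degree_le_natDegree ?_
  exact_mod_cast Nat.lt_succ_of_le h

/-- Adapted coordinates for a line. -/
structure LineData (X : Finset (P2 K)) where
  φ : Module.Dual K (Fin 3 → K)
  a : Module.Dual K (Fin 3 → K)
  b : Module.Dual K (Fin 3 → K)
  w : Fin 3 → K
  u : Fin 3 → K
  φ0 : φ ≠ 0
  φw : φ w = 0
  φu : φ u = 0
  aw : a w = 1
  au : a u = 0
  bw : b w = 0
  bu : b u = 1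
  dec : ∀ z, φ z = 0 → z = a z • w + b z • u
  ax : ∀ p ∈ X, a p.rep ≠ 0

lemma finrank_degreeLT (n : ℕ) : Module.finrank K (Polynomial.degreeLT K n) = n := by
  rw [(Polynomial.degreeLTEquiv K n).finrank_eq, Module.finrank_fin_fun]

instance (n : ℕ) : Module.Finite K (Polynomial.degreeLT K n) :=
  Module.Finite.equiv (Polynomial.degreeLTEquiv K n).symm

lemma rho_ker {X : Finset (P2 K)} (D : LineData X) {T : ℕ} {f : MvPolynomial (Fin 3) K}
    (hf : f ∈ Rm K (T + 1)) (h0 : rho D.w D.u f = 0) : ∃ g ∈ Rm K T, f = lin D.φ * g := by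
  let r : Rm K (T + 1) →ₗ[K] Polynomial K := (rho D.w D.u).toLinearMap.domRestrict (Rm K (T + 1))
  have hr : Polynomial.degreeLT K (T + 1) ≤ LinearMap.range r := by
    classical
    rw [Polynomial.degreeLT_eq_span_X_pow, Submodule.span_le]
    intro q hq
    simp only [Finset.coe_image, Set.mem_image, Finset.coe_range, Set.mem_Iio] at hq
    obtain ⟨i, hi, rfl⟩ := hq
    have hm : lin D.a ^ (T - i) * lin D.b ^ i ∈ Rm K (T + 1) := by
      have := ((lin_hom D.a).pow (T - i)).mul ((lin_hom D.b).pow i)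
      rw [show 1 * (T - i) + 1 * i = T by omega] at this
      exact this
    refine ⟨⟨_, hm⟩, ?_⟩
    change rho D.w D.u (lin D.a ^ (T - i) * lin D.b ^ i) = _
    rw [map_mul, map_pow, map_pow, rho_lin, rho_lin, D.aw, D.au, D.bw, D.bu]
    simp
  have h1 := Submodule.finrank_mono hr
  rw [finrank_degreeLT] at h1
  have h2 := LinearMap.finrank_range_add_finrank_ker r
  rw [finrank_Rm, choose_two_succ] at h2
  set A := (Rm K T).map (ml D.φ)
  have hA : A ≤ (LinearMap.ker r).map (Rm K (T + 1)).subtype := by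
    rintro _ ⟨g, hg, rfl⟩
    refine ⟨⟨ml D.φ g, lin_mul_mem_Rm _ hg⟩, ?_, rfl⟩
    change rho D.w D.u (lin D.φ * g) = 0
    rw [map_mul, rho_lin, D.φw, D.φu]
    simp
  have e1 : Module.finrank K A = (T + 1).choose 2 := by
    rw [← finrank_Rm (K := K)]
    exact (Submodule.equivMapOfInjective _ (ml_inj D.φ0) _).finrank_eq.symm
  have e2 : Module.finrank K ((LinearMap.ker r).map (Rm K (T + 1)).subtype) =
      Module.finrank K (LinearMap.ker r) :=
    (Submodule.equivMapOfInjective _ (Submodule.injective_subtype _) _).finrank_eq.symm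
  have hAe := Submodule.eq_of_le_of_finrank_le hA (by omega)
  have : f ∈ A := by
    rw [hAe]
    exact ⟨⟨f, hf⟩, h0, rfl⟩
  obtain ⟨g, hg, rfl⟩ := this
  exact ⟨g, hg, rfl⟩

lemma rho_dvd {X : Finset (P2 K)} (D : LineData X) {p : P2 K} (hp : p ∈ X)
    (hpφ : D.φ p.rep = 0) {m : ℕ}
    {f : MvPolynomial (Fin 3) K} (hf : f ∈ pointIdeal p ^ m) :
    (Polynomial.X - Polynomial.C (D.b p.rep / D.a p.rep)) ^ m ∣ rho D.w D.u f := by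
  have h1 : (pointIdeal p).map (rho D.w D.u) ≤
      Ideal.span {Polynomial.X - Polynomial.C (D.b p.rep / D.a p.rep)} := by
    rw [pointIdeal, Ideal.map_span, Ideal.span_le]
    rintro _ ⟨g, ⟨hg, hg0⟩, rfl⟩
    obtain ⟨ψ, rfl⟩ := exists_lin hg
    rw [eval_lin] at hg0
    simp only [SetLike.mem_coe, Ideal.mem_span_singleton]
    rw [rho_lin, Polynomial.dvd_iff_isRoot, Polynomial.IsRoot.def]
    have ha := D.ax p hp
    rw [D.dec _ hpφ, map_add, map_smul, map_smul, smul_eq_mul, smul_eq_mul] at hg0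
    simp only [Polynomial.eval_add, Polynomial.eval_C, Polynomial.eval_mul, Polynomial.eval_X]
    field_simp
    linear_combination hg0
  have h2 := Ideal.mem_map_of_mem (rho D.w D.u) hf
  rw [Ideal.map_pow] at h2
  have h3 := Ideal.pow_right_mono h1 m h2
  rwa [Ideal.span_singleton_pow, Ideal.mem_span_singleton] at h3

lemma slope_inj {X : Finset (P2 K)} (D : LineData X) {p q : P2 K} (hp : p ∈ X) (hq : q ∈ X)
    (hpφ : D.φ p.rep = 0) (hqφ : D.φ q.rep = 0)
    (h : D.b p.rep / D.a p.rep = D.b q.rep / D.a q.rep) : p = q := by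
  have ha := D.ax p hp
  have hb := D.ax q hq
  rw [← p.mk_rep, ← q.mk_rep, Projectivization.mk_eq_mk_iff']
  refine ⟨D.a p.rep / D.a q.rep, ?_⟩
  rw [div_eq_div_iff ha hb] at h
  have e1 : (D.a p.rep / D.a q.rep) • (D.a q.rep • D.w + D.b q.rep • D.u) =
      D.a p.rep • D.w + D.b p.rep • D.u := by
    rw [smul_add, smul_smul, smul_smul]
    congr 2
    · field_simp
    · field_simp
      linear_combination -h
  rwa [← D.dec _ hqφ, ← D.dec _ hpφ] at e1

open Classical in
lemma line_step {X : Finset (P2 K)} (D : LineData X) (μ : P2 K → ℕ) {T : ℕ}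
    (hT : ∑ p ∈ X with D.φ p.rep = 0, μ p ≤ T + 1) :
    vv (FI X μ) (T + 1) + ∑ p ∈ X with D.φ p.rep = 0, μ p ≤ vv (FI X (resid D.φ μ)) T + (T + 1) := by
  set S := X.filter fun p => D.φ p.rep = 0 with hS
  set n := ∑ p ∈ S, μ p with hn
  set V := gp (FI X μ) (T + 1) with hV
  let F : P2 K → Polynomial K := fun p => Polynomial.X - Polynomial.C (D.b p.rep / D.a p.rep)
  let P : Polynomial K := ∏ p ∈ S, F p ^ μ p
  have hPm : P.Monic := Polynomial.monic_prod_of_monic _ _ fun p _ =>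
    (Polynomial.monic_X_sub_C _).pow _
  have hPd : P.natDegree = n := by
    rw [Polynomial.natDegree_prod_of_monic _ _ fun p _ => (Polynomial.monic_X_sub_C _).pow _]
    refine Finset.sum_congr rfl fun p _ => ?_
    rw [Polynomial.natDegree_pow, Polynomial.natDegree_X_sub_C, mul_one]
  have hdvd : ∀ f ∈ V, P ∣ rho D.w D.u f := by
    intro f hf
    have hf1 := mem_FI.mp hf.1
    refine Finset.prod_dvd_of_coprime ?_ ?_
    · intro p hp q hq hpq
      simp only [hS, Finset.coe_filter, Set.mem_ofPred_eq] at hp hq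
      refine IsCoprime.pow ?_
      refine Polynomial.pairwise_coprime_X_sub_C Function.injective_id ?_
      intro h
      exact hpq (slope_inj D hp.1 hq.1 hp.2 hq.2 h)
    · intro p hp
      rw [hS, Finset.mem_filter] at hp
      exact rho_dvd D hp.1 hp.2 (hf1 p hp.1)
  let r : V →ₗ[K] Polynomial K := (rho D.w D.u).toLinearMap.domRestrict V
  have h2 := LinearMap.finrank_range_add_finrank_ker r
  have hker : Module.finrank K (LinearMap.ker r) ≤ vv (FI X (resid D.φ μ)) T := by
    have hle : (LinearMap.ker r).map V.subtype ≤ (gp (FI X (resid D.φ μ)) T).map (ml D.φ) := by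
      rintro _ ⟨⟨f, hf⟩, hf0, rfl⟩
      obtain ⟨g, hg, hfg⟩ := rho_ker D hf.2 hf0
      refine ⟨g, ⟨?_, hg⟩, hfg.symm⟩
      refine mem_resid D.φ0 ?_
      rw [← hfg]; exact hf.1
    have e1 := (Submodule.equivMapOfInjective V.subtype (Submodule.injective_subtype _)
      (LinearMap.ker r)).finrank_eq
    have e2 := (Submodule.equivMapOfInjective _ (ml_inj D.φ0)
      (gp (FI X (resid D.φ μ)) T)).finrank_eq
    have e3 := Submodule.finrank_mono hle
    rw [← e1, ← e2] at e3
    exact e3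
  have hran : Module.finrank K (LinearMap.range r) ≤ T + 1 - n := by
    have hle : LinearMap.range r ≤
        (Polynomial.degreeLT K (T + 1 - n)).map (LinearMap.mulLeft K P) := by
      rintro _ ⟨⟨f, hf⟩, rfl⟩
      change rho D.w D.u f ∈ _
      obtain ⟨q, hq⟩ := hdvd f hf
      refine ⟨q, ?_, hq.symm⟩
      have hd := rho_degree (w := D.w) (u := D.u) hf.2
      rw [hq] at hd
      rw [SetLike.mem_coe, Polynomial.mem_degreeLT]
      rw [Polynomial.mem_degreeLT] at hd
      by_cases hq0 : q = 0
      · rw [hq0]; simp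
      · rw [Polynomial.degree_mul, Polynomial.degree_eq_natDegree hPm.ne_zero, hPd,
          Polynomial.degree_eq_natDegree hq0] at hd
        rw [Polynomial.degree_eq_natDegree hq0]
        norm_cast at hd ⊢
        omega
    refine (Submodule.finrank_mono hle).trans ?_
    refine (Submodule.finrank_map_le _ _).trans ?_
    rw [finrank_degreeLT]
  have : Module.finrank K V = vv (FI X μ) (T + 1) := rfl
  omega

/-- The optimal Hilbert function bound. -/
def Good (X : Finset (P2 K)) (μ : P2 K → ℕ) (T : ℕ) : Prop :=
  vv (FI X μ) T + dg X μ ≤ (T + 1).choose 2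

open Classical in
lemma good_step {X : Finset (P2 K)} (D : LineData X) (μ : P2 K → ℕ) {T : ℕ}
    (hT : ∑ p ∈ X with D.φ p.rep = 0, μ p ≤ T) (h : Good X (resid D.φ μ) (T - 1)) :
    Good X μ T := by
  unfold Good at *
  have hd := dg_resid X μ D.φ
  rcases T with _ | T
  · have h1 := vv_le (FI X μ) 0
    have : (0 - 1 + 1).choose 2 = 0 := rfl
    have : (0 + 1).choose 2 = 0 := rfl
    omega
  · have h1 := line_step D μ hT
    have h2 := choose_two_succ (T + 1)
    simp only [Nat.add_sub_cancel] at h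
    omega

open Classical in
lemma lower_step {X : Finset (P2 K)} (D : LineData X) (μ : P2 K → ℕ) {T : ℕ}
    (h : Good X μ (T + 1)) : ∑ p ∈ X with D.φ p.rep = 0, μ p ≤ T + 1 := by
  unfold Good at h
  have hd := dg_resid X μ D.φ
  have h1 := vv_resid_le X μ D.φ0 T
  have h2 := vv_ge X (resid D.φ μ) T
  have h3 := choose_two_succ (T + 1)
  omega

lemma exists_lineData [Infinite K] (X : Finset (P2 K)) (L : ProjLine K) :
    ∃ D : LineData X, ∀ p : P2 K, p ∈ L.points ↔ D.φ p.rep = 0 := by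
  have hL := L.finrank_eq_two
  have hlt : L.toSubmodule < ⊤ := by
    rw [lt_top_iff_ne_top]
    intro h
    rw [h, finrank_top, Module.finrank_fin_fun] at hL
    omega
  obtain ⟨φ, φ0, hφ⟩ := Submodule.exists_le_ker_of_lt_top _ hlt
  have hker : L.toSubmodule = LinearMap.ker φ := by
    refine Submodule.eq_of_le_of_finrank_le hφ ?_
    have h1 := LinearMap.finrank_range_add_finrank_ker φ
    have h2 : 0 < Module.finrank K (LinearMap.range φ) := by
      rw [Nat.pos_iff_ne_zero]
      intro h
      rw [Submodule.finrank_eq_zero, LinearMap.range_eq_bot] at h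
      exact φ0 h
    rw [Module.finrank_fin_fun] at h1
    omega
  obtain ⟨e, heL, he0⟩ : ∃ e ∈ L.toSubmodule, e ≠ 0 := by
    apply Submodule.exists_mem_ne_zero_of_ne_bot
    intro h
    rw [h, finrank_bot] at hL
    omega
  obtain ⟨a, ha⟩ := Module.exists_dual_forall_apply_ne_zero (K := K)
    (fun o : Option X => (match o with | none => e | some p => p.1.rep : Fin 3 → K)) (by
      rintro (_ | p)
      · exact he0
      · exact p.1.rep_nonzero)
  have hae : a e ≠ 0 := ha none
  obtain ⟨u, hu0, huL, hau⟩ : ∃ u, u ≠ 0 ∧ u ∈ L.toSubmodule ∧ a u = 0 := by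
    have h1 := LinearMap.finrank_range_add_finrank_ker (a.domRestrict L.toSubmodule)
    have h2 := Submodule.finrank_le (LinearMap.range (a.domRestrict L.toSubmodule))
    rw [Module.finrank_self] at h2
    have h3 : LinearMap.ker (a.domRestrict L.toSubmodule) ≠ ⊥ := by
      intro h
      rw [h, finrank_bot] at h1
      omega
    obtain ⟨x, hx, hx0⟩ := Submodule.exists_mem_ne_zero_of_ne_bot h3
    exact ⟨x, by simpa using hx0, x.2, hx⟩
  let w := (a e)⁻¹ • e
  have hw : w ∈ L.toSubmodule := Submodule.smul_mem _ _ heL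
  have haw : a w = 1 := by simp [w, hae]
  obtain ⟨b0, hb0⟩ := Module.Projective.exists_dual_ne_zero K hu0
  let b1 := (b0 u)⁻¹ • b0
  have hb1 : b1 u = 1 := by simp [b1, hb0]
  let b := b1 - b1 w • a
  have hbu : b u = 1 := by simp [b, hb1, hau]
  have hbw : b w = 0 := by simp [b, haw]
  have hli : LinearIndependent K ![w, u] := by
    rw [LinearIndependent.pair_iff]
    intro s t hst
    have h1 := congrArg a hst
    have h2 := congrArg b hst
    simp only [map_add, map_smul, haw, hau, hbw, hbu, map_zero, smul_eq_mul] at h1 h2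
    constructor
    · simpa using h1
    · simpa using h2
  have hspan : Submodule.span K {w, u} = L.toSubmodule := by
    refine Submodule.eq_of_le_of_finrank_le ?_ ?_
    · rw [Submodule.span_le]
      rintro z (rfl | rfl)
      · exact hw
      · exact huL
    · have := finrank_span_eq_card hli
      have hr : Set.range ![w, u] = {w, u} := by
        ext z; simp [or_comm]
      rw [hr, Fintype.card_fin] at this
      rw [this, hL]
  refine ⟨⟨φ, a, b, w, u, φ0, hφ hw, hφ huL, haw, hau, hbw, hbu, ?_, ?_⟩, ?_⟩
  · intro z hz
    have hz' : z ∈ Submodule.span K {w, u} := by rw [hspan, hker]; exact hz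
    obtain ⟨s, t, rfl⟩ := Submodule.mem_span_pair.mp hz'
    simp [haw, hau, hbw, hbu]
  · intro p hp
    exact ha (some ⟨p, hp⟩)
  · intro p
    simp only [ProjLine.points, Set.mem_ofPred_eq, hker, Projectivization.submodule_eq,
      Submodule.span_singleton_le_iff_mem, LinearMap.mem_ker]

end KConf

namespace KConf

variable {K : Type} [Field K]

lemma line_eq {L M : ProjLine K} {p q : P2 K} (hpq : p ≠ q) (h1 : p ∈ L.points)
    (h2 : q ∈ L.points) (h3 : p ∈ M.points) (h4 : q ∈ M.points) : L = M := by
  have hi : p.submodule ⊓ q.submodule = ⊥ := by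
    by_contra h
    have h5 : 0 < Module.finrank K ↥(p.submodule ⊓ q.submodule) :=
      Nat.pos_of_ne_zero fun h0 => h (Submodule.finrank_eq_zero.mp h0)
    have e1 : p.submodule ⊓ q.submodule = p.submodule :=
      Submodule.eq_of_le_of_finrank_le inf_le_left (by rw [p.finrank_submodule]; omega)
    have e2 : p.submodule ⊓ q.submodule = q.submodule :=
      Submodule.eq_of_le_of_finrank_le inf_le_right (by rw [q.finrank_submodule]; omega)
    exact hpq (Projectivization.submodule_injective (e1.symm.trans e2))
  have hs := Submodule.finrank_sup_add_finrank_inf_eq p.submodule q.submodule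
  rw [hi, finrank_bot, p.finrank_submodule, q.finrank_submodule] at hs
  have key : ∀ N : ProjLine K, p ∈ N.points → q ∈ N.points →
      p.submodule ⊔ q.submodule = N.toSubmodule := fun N h h' =>
    Submodule.eq_of_le_of_finrank_le (sup_le h h') (by rw [N.finrank_eq_two]; omega)
  have := (key L h1 h2).symm.trans (key M h3 h4)
  cases L; cases M; cases this; rfl

lemma mono_gap {s : ℕ} {d : Fin s → ℕ} (hd : StrictMono d) (i : Fin s) (k : ℕ)
    (h : i.1 + k < s) : d i + k ≤ d ⟨i.1 + k, h⟩ := by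
  induction k with
  | zero => simp
  | succ k ih =>
    have h1 := ih (by omega)
    have h2 : d ⟨i.1 + k, by omega⟩ < d ⟨i.1 + (k + 1), h⟩ := hd (by simp [Fin.lt_def])
    omega

variable {s : ℕ} {X : Set (P2 K)} {d : Fin s → ℕ} {Xs : Fin s → Set (P2 K)} {Ls : Fin s → ProjLine K}

lemma finite_Xs (hX : IsKConfig X d Xs Ls) (i : Fin s) : (Xs i).Finite := by
  apply Set.finite_of_ncard_pos
  rw [hX.card_eq]
  exact hX.one_le i

lemma finite_X (hX : IsKConfig X d Xs Ls) : X.Finite := by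
  rw [hX.union_eq]
  exact Set.finite_iUnion (finite_Xs hX)

open Classical in
lemma sum_bound (hX : IsKConfig X d Xs Ls) (i : Fin s) (m : ℕ) (μ : P2 K → ℕ)
    (h1 : ∀ p ∈ X, μ p ≤ m + 1) (h2 : ∀ j, i < j → ∀ p ∈ Xs j, μ p ≤ m) :
    ∑ p ∈ (finite_X hX).toFinset with p ∈ (Ls i).points, μ p ≤
      (m + 1) * d i + (s - 1 - i) * m := by
  set S := (finite_X hX).toFinset.filter fun p => p ∈ (Ls i).points with hS
  have hmem : ∀ p ∈ S, p ∈ X ∧ p ∈ (Ls i).points := by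
    intro p hp
    simpa [hS] using hp
  have step1 : ∑ p ∈ S, μ p ≤ ∑ p ∈ S, ∑ j ∈ Finset.Ici i, if p ∈ Xs j then μ p else 0 := by
    refine Finset.sum_le_sum fun p hp => ?_
    obtain ⟨hpX, hpL⟩ := hmem p hp
    rw [hX.union_eq, Set.mem_iUnion] at hpX
    obtain ⟨j, hj⟩ := hpX
    have hij : j ∈ Finset.Ici i := by
      rw [Finset.mem_Ici]
      by_contra hlt
      exact hX.not_mem i j (not_le.mp hlt) p hj hpL
    calc μ p = if p ∈ Xs j then μ p else 0 := by rw [if_pos hj]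
      _ ≤ _ := Finset.single_le_sum (f := fun j => if p ∈ Xs j then μ p else 0)
        (fun _ _ => Nat.zero_le _) hij
  refine step1.trans ?_
  rw [Finset.sum_comm, ← Finset.Ioi_insert, Finset.sum_insert (by simp)]
  refine add_le_add ?_ ?_
  · rw [← Finset.sum_filter]
    have hc : (S.filter fun p => p ∈ Xs i).card ≤ d i := by
      rw [← hX.card_eq i, ← Set.ncard_coe_finset]
      refine Set.ncard_le_ncard ?_ (finite_Xs hX i)
      intro p hp
      simp only [Finset.coe_filter, Set.mem_ofPred_eq] at hp
      exact hp.2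
    calc _ ≤ (S.filter fun p => p ∈ Xs i).card • (m + 1) := by
          refine Finset.sum_le_card_nsmul _ _ _ fun p hp => ?_
          exact h1 p (hmem p (Finset.mem_filter.mp hp).1).1
      _ ≤ _ := by
          rw [smul_eq_mul, mul_comm]
          exact Nat.mul_le_mul_left _ hc
  · calc _ ≤ (Finset.Ioi i).card • m := by
          refine Finset.sum_le_card_nsmul _ _ _ fun j hj => ?_
          rw [Finset.mem_Ioi] at hj
          rw [← Finset.sum_filter]
          have hc : (S.filter fun p => p ∈ Xs j).card ≤ 1 := by
            rw [Finset.card_le_one]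
            intro p hp q hq
            by_contra hpq
            rw [Finset.mem_filter] at hp hq
            have := line_eq hpq (hmem p hp.1).2 (hmem q hq.1).2 (hX.subset_line j hp.2)
              (hX.subset_line j hq.2)
            exact hj.ne (hX.lines_distinct this)
          calc _ ≤ (S.filter fun p => p ∈ Xs j).card • m :=
                Finset.sum_le_card_nsmul _ _ _ fun p hp => h2 j hj p (Finset.mem_filter.mp hp).2
            _ ≤ 1 * m := Nat.mul_le_mul_right _ hc
            _ = m := one_mul m
      _ = _ := by rw [Fin.card_Ioi, smul_eq_mul]

lemma good_zero (X : Finset (P2 K)) (μ : P2 K → ℕ) (h : ∀ p ∈ X, μ p = 0) (T : ℕ) :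
    Good X μ T := by
  have : dg X μ = 0 := by
    unfold dg
    refine Finset.sum_eq_zero fun p hp => ?_
    rw [h p hp]; rfl
  unfold Good
  rw [this, add_zero]
  exact vv_le _ _

lemma main_good [Infinite K] (hX : IsKConfig X d Xs Ls) {ds : ℕ}
    (hd1 : ∀ i : Fin s, d i + (s - 1 - i) ≤ ds) (hd2 : s ≤ ds) (m : ℕ) :
    ∀ μ : P2 K → ℕ, (∀ p ∈ X, μ p ≤ m) → ∀ T, m * ds ≤ T → Good (finite_X hX).toFinset μ T := by
  classical
  induction m with
  | zero =>
    intro μ hμ T _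
    exact good_zero _ _ (fun p hp => Nat.le_zero.mp (hμ p (by simpa using hp))) _
  | succ m ih =>
    have key : ∀ i, i ≤ s → ∀ μ : P2 K → ℕ, (∀ p ∈ X, μ p ≤ m + 1) →
        (∀ j : Fin s, i ≤ j.1 → ∀ p ∈ Xs j, μ p ≤ m) → ∀ T, (m + 1) * ds ≤ T + (s - i) →
        Good (finite_X hX).toFinset μ T := by
      intro i
      induction i with
      | zero =>
        intro _ μ _ h2 T hT
        refine ih μ ?_ T ?_
        · intro p hp
          rw [hX.union_eq, Set.mem_iUnion] at hp
          obtain ⟨j, hj⟩ := hp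
          exact h2 j (Nat.zero_le _) p hj
        · rw [add_mul] at hT
          omega
      | succ i ihi =>
        intro hi μ h1 h2 T hT
        let i' : Fin s := ⟨i, hi⟩
        obtain ⟨D, hD⟩ := exists_lineData (finite_X hX).toFinset (Ls i')
        have hr : ∀ p, resid D.φ μ p ≤ μ p := by
          intro p; unfold resid; split_ifs <;> omega
        refine good_step D μ ?_ ?_
        · have hb := sum_bound hX i' m μ h1 (fun j hj p hp => h2 j hj p hp)
          simp only [hD] at hb
          refine hb.trans ?_
          have hd := hd1 i'
          have e : (m + 1) * d i' + (m + 1) * (s - 1 - i) ≤ (m + 1) * ds := by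
            rw [← mul_add]; exact Nat.mul_le_mul_left _ hd
          have e2 : (m + 1) * (s - 1 - i) = (s - 1 - i) * m + (s - 1 - i) := by ring
          change (m + 1) * d i' + (s - 1 - i) * m ≤ T
          omega
        · refine ihi (by omega) _ (fun p hp => (hr p).trans (h1 p hp)) ?_ _ (by omega)
          intro j hj p hp
          rcases Nat.lt_or_ge i j.1 with hlt | hge
          · exact (hr p).trans (h2 j hlt p hp)
          · have hji : j = i' := Fin.ext (by simp [i']; omega)
            subst hji
            have hp0 : D.φ p.rep = 0 := (hD p).mp (hX.subset_line _ hp)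
            have := h1 p (by rw [hX.union_eq]; exact Set.mem_iUnion.mpr ⟨_, hp⟩)
            unfold resid
            rw [if_pos hp0]
            omega
    intro μ hμ T hT
    exact key s le_rfl μ hμ (fun j hj => absurd j.2 (by omega)) T (by omega)

end KConf

/-- **Corollary (regularity index).** Let `X` be a k-configuration of type
`(d₁,…,d_s)`. Then for all `m ≥ s + 1`, the regularity index of `mX` is
`ri(mX) = m·d_s − 1`; that is, `m·d_s − 1` is the least `t` with
`H_{mX}(t) = deg(mX) = |X|·C(m+1,2)`. -/
theorem kconfig_regularity_index {K : Type} [Field K] [IsAlgClosed K] {s : ℕ} (hs : 0 < s)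
    (X : Set (P2 K)) (d : Fin s → ℕ) (Xs : Fin s → Set (P2 K)) (Ls : Fin s → ProjLine K)
    (hX : IsKConfig X d Xs Ls)
    (ds : ℕ) (hds : ds = d ⟨s - 1, Nat.sub_lt hs Nat.one_pos⟩) :
    ∀ m : ℕ, s + 1 ≤ m →
      IsLeast {t : ℕ | hilb (fatIdeal X m) t = X.ncard * Nat.choose (m + 1) 2}
        (m * ds - 1) := by
  classical
  intro m hm
  have hinf : Infinite K := IsAlgClosed.instInfinite
  have hlast : ∀ i : Fin s, d i + (s - 1 - i) ≤ ds := by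
    intro i
    have h := KConf.mono_gap hX.strictMono i (s - 1 - i) (by omega)
    rw [hds]
    refine h.trans (le_of_eq ?_)
    congr 1
    exact Fin.ext (by simp; omega)
  have hsd : s ≤ ds := by
    have h := hlast ⟨0, hs⟩
    have h1 := hX.one_le ⟨0, hs⟩
    simp only at h
    omega
  have hds1 : 1 ≤ m * ds := Nat.mul_pos (by omega) (by omega)
  set Y := (KConf.finite_X hX).toFinset with hY
  have hFI : fatIdeal X m = KConf.FI Y (fun _ => m) := by
    simp [fatIdeal, KConf.FI, hY]
  have hdg : KConf.dg Y (fun _ => m) = X.ncard * Nat.choose (m + 1) 2 := by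
    rw [KConf.dg, Finset.sum_const, smul_eq_mul, hY, Set.ncard_eq_toFinset_card X (KConf.finite_X hX)]
  constructor
  · have hg := KConf.main_good hX hlast hsd m (fun _ => m) (fun _ _ => le_rfl) (m * ds) le_rfl
    rw [← hY] at hg
    have hge := KConf.vv_ge Y (fun _ => m) (m * ds)
    unfold KConf.Good at hg
    rw [Set.mem_ofPred_eq, KConf.hilb_eq, hFI, ← hdg]
    rw [show m * ds - 1 + 2 = m * ds + 1 by omega, show m * ds - 1 + 1 = m * ds by omega]
    omega
  · intro t ht
    rw [Set.mem_ofPred_eq, KConf.hilb_eq, hFI, ← hdg] at ht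
    have hle := KConf.vv_le (KConf.FI Y (fun _ => m)) (t + 1)
    obtain ⟨D, hD⟩ := KConf.exists_lineData Y (Ls ⟨s - 1, Nat.sub_lt hs Nat.one_pos⟩)
    have hlow := KConf.lower_step D (fun _ => m) (T := t) (by
      unfold KConf.Good
      simp only [add_assoc, Nat.reduceAdd] at *
      omega)
    have hc : ds ≤ (Y.filter fun p => D.φ p.rep = 0).card := by
      rw [hds, ← hX.card_eq, ← Set.ncard_coe_finset]
      refine Set.ncard_le_ncard ?_ (Finset.finite_toSet _)
      intro p hp
      simp only [Finset.coe_filter, Set.mem_ofPred_eq]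
      refine ⟨?_, (hD p).mp (hX.subset_line _ hp)⟩
      rw [hY, Set.Finite.mem_toFinset, hX.union_eq]
      exact Set.mem_iUnion.mpr ⟨_, hp⟩
    rw [Finset.sum_const, smul_eq_mul] at hlow
    have := Nat.mul_le_mul_right m hc
    rw [mul_comm ds m] at this
    omega
end
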